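/- Let X be the punctured Möbius band with boundary circles C₁ and C₂. Suppose f : X → X is a boundary-preserving map with f(C₁) ⊆ C₂ and f(C₂) ⊆ C₁, such that the restriction, viewed as a map f|C₁ : C₁ → C₂, is essential, while the restriction f|C₂ : C₂ → ∂X is inessential. Then f is boundary-homotopic to a map g : X → X having exactly one fixed point. -/

import Mathlib

open Set

namespace PMB

/-- The square [0,1] × [−1,1] as a subspace of ℝ². -/
def Sq : Set (ℝ × ℝ) := Set.Icc 0 1 ×ˢ Set.Icc (-1) 1

/-- The identification (0,y) ∼ (1,−y) on the square. -/
def rel (p q : Sq) : Prop :=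
  (p : ℝ × ℝ) = (q : ℝ × ℝ) ∨
  ((p : ℝ × ℝ).1 = 0 ∧ (q : ℝ × ℝ).1 = 1 ∧ (p : ℝ × ℝ).2 = -(q : ℝ × ℝ).2) ∨
  ((p : ℝ × ℝ).1 = 1 ∧ (q : ℝ × ℝ).1 = 0 ∧ (q : ℝ × ℝ).2 = -(p : ℝ × ℝ).2)

/-- The Möbius band: the quotient of the square by the identification. -/
def M := Quot rel

instance : TopologicalSpace M := inferInstanceAs (TopologicalSpace (Quot rel))

/-- The quotient map. -/
def qm : Sq → M := Quot.mk rel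

/-- The open disc of radius 1/4 centred at (1/2, 0). -/
def Bdisc : Set (ℝ × ℝ) := Metric.ball (1/2, 0) (1/4)

/-- The circle of radius 1/4 centred at (1/2, 0). -/
def Scirc : Set (ℝ × ℝ) := Metric.sphere (1/2, 0) (1/4)

/-- The punctured Möbius band, as a subset of the Möbius band. -/
def Xset : Set M := {m | m ∉ qm '' {p : Sq | (p : ℝ × ℝ) ∈ Bdisc}}

/-- The punctured Möbius band as a topological space. -/
abbrev X : Type := ↥Xset

/-- The boundary circle of the Möbius band. -/
def C1 : Set X := {x | ∃ p : Sq, qm p = (x : M) ∧ ((p : ℝ × ℝ).2 = 1 ∨ (p : ℝ × ℝ).2 = -1)}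

/-- The boundary circle coming from the removed disc. -/
def C2 : Set X := {x | ∃ p : Sq, qm p = (x : M) ∧ (p : ℝ × ℝ) ∈ Scirc}

/-- The boundary of the punctured Möbius band. -/
def Bd : Set X := C1 ∪ C2

/-- A self-map of the punctured Möbius band is boundary-preserving if it sends ∂X into ∂X. -/
def BoundaryPreserving (f : C(X, X)) : Prop := MapsTo f Bd Bd

/-- Two self-maps are boundary-homotopic if there is a homotopy between them keeping
∂X inside ∂X at all times. -/
def BoundaryHomotopic (f g : C(X, X)) : Prop :=
  ∃ H : ContinuousMap.Homotopy f g, ∀ x : X, x ∈ Bd → ∀ t : unitInterval, H (t, x) ∈ Bd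

/-- A continuous map is inessential if it is homotopic to a constant map. -/
def Inessential {α β : Type*} [TopologicalSpace α] [TopologicalSpace β] (f : C(α, β)) : Prop :=
  ∃ b : β, ContinuousMap.Homotopic f (ContinuousMap.const α b)

/-- A continuous map is essential if it is not homotopic to a constant map. -/
def Essential {α β : Type*} [TopologicalSpace α] [TopologicalSpace β] (f : C(α, β)) : Prop :=
  ¬ Inessential f

/-- The restriction of a self-map of X to a subset `s` mapped into a subset `t`,
as a continuous map between the subspaces. -/
def restrictMap (f : C(X, X)) {s t : Set X} (h : MapsTo f s t) : C(s, t) :=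
  ⟨fun x => ⟨f x, h x.2⟩, Continuous.subtype_mk (f.continuous.comp continuous_subtype_val) _⟩

/-!
The map `f` is nullhomotopic from `C2` to `C1`, so it extends to a map `F` of the whole Möbius band
`M` that sends the hole to `C1`. As `f` is essential from `C1` to `C2`, the angle of `F` about the
hole increases without bound in the universal cover of `M`. Hence, on both sides of a fundamental
domain `[0, 1] × [-1, 1]`, it passes a value at which one can leave `F` and slide along a slit from
`C1` to `C2`. This continues `F` to `[-1, 2] × [-1, 1]`, equivariantly and with the boundary of the
rectangle mapped to `C2`. Pulling the core circle of `M` over that boundary deforms `F` until a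
neighbourhood of the core goes to `C2`.

Away from the hole, the deformed map followed by a vertical compression into that neighbourhood has
no fixed point, since such a point would lie on `C2`. Near the hole the map can be made constant
with value on `C2`, and pushing this value outwards as the radius decreases produces exactly one
fixed point.
-/

noncomputable section

section General

variable {α β γ : Type*} [TopologicalSpace α] [TopologicalSpace β] [TopologicalSpace γ]

lemma continuous_dite_le [LinearOrder γ] [OrderClosedTopology γ] {a b : α → γ}
    (ha : Continuous a) (hb : Continuous b) {F : {x // a x ≤ b x} → β} {G : {x // b x ≤ a x} → β}
    (hF : Continuous F) (hG : Continuous G)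
    (hFG : ∀ x (h : a x = b x), F ⟨x, h.le⟩ = G ⟨x, h.ge⟩) :
    Continuous fun x ↦ if h : a x ≤ b x then F ⟨x, h⟩ else G ⟨x, le_of_not_ge h⟩ := by
  have hcover : {x | a x ≤ b x} ∪ {x | b x ≤ a x} = univ :=
    eq_univ_of_forall fun x ↦ le_total (a x) (b x)
  rw [← continuousOn_univ, ← hcover]
  refine ContinuousOn.union_of_isClosed ?_ ?_ (isClosed_le ha hb) (isClosed_le hb ha)
  · rw [continuousOn_iff_continuous_domRestrict]
    exact hF.congr fun x ↦ by rw [domRestrict_apply, dif_pos x.2]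
  · rw [continuousOn_iff_continuous_domRestrict]
    refine hG.congr fun x ↦ ?_
    rw [domRestrict_apply]
    split_ifs with h
    · exact (hFG x (h.antisymm x.2)).symm
    · rfl

lemma exists_extension_of_nullhomotopic_sphere {E : Type*} [NormedAddCommGroup E] [NormedSpace ℝ E]
    {R : ℝ} (hR : 0 < R) {φ : C(Metric.sphere (0 : E) R, β)} (hφ : φ.Nullhomotopic) :
    ∃ Φ : C(E, β), ∀ v : Metric.sphere (0 : E) R, Φ v = φ v := by
  obtain ⟨b, ⟨H⟩⟩ := hφ
  have hne (v : {v : E // R / 2 ≤ ‖v‖}) : ‖(v : E)‖ ≠ 0 := by linarith [v.2]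
  let proj (v : {v : E // R / 2 ≤ ‖v‖}) : Metric.sphere (0 : E) R :=
    ⟨(R / ‖(v : E)‖) • (v : E), by
      simp [norm_smul, abs_of_pos hR, div_mul_cancel₀ _ (hne v)]⟩
  have hproj : Continuous proj := by
    refine Continuous.subtype_mk (.smul (.div continuous_const (by fun_prop) hne) (by fun_prop)) _
  let outer (v : {v : E // R / 2 ≤ ‖v‖}) : β :=
    H (projIcc 0 1 zero_le_one (2 - 2 * ‖(v : E)‖ / R), proj v)
  have houter : Continuous outer :=
    H.continuous.comp ((continuous_projIcc.comp (by fun_prop)).prodMk hproj)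
  refine ⟨⟨_, continuous_dite_le continuous_norm continuous_const
    (F := fun _ ↦ b) continuous_const houter fun v hv ↦ ?_⟩, fun v ↦ ?_⟩
  · have h1 : 2 - 2 * ‖v‖ / R = 1 := by rw [hv]; field_simp; norm_num
    simp [outer, h1]
  · have hv : ‖(v : E)‖ = R := mem_sphere_zero_iff_norm.1 v.2
    have h0 : 2 - 2 * R / R ≤ 0 := by rw [mul_div_cancel_right₀ _ hR.ne']; norm_num
    have hpv (h : R / 2 ≤ ‖(v : E)‖) : proj ⟨v, h⟩ = v :=
      Subtype.ext (by simp [proj, hv, div_self hR.ne'])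
    simp [outer, hv, hpv, projIcc_of_le_left _ h0, hR]

lemma exists_equivariant_lift_circle [SimplyConnectedSpace α] [LocallyPathConnectedSpace α]
    (φ : C(α, Circle)) (σ : C(α, α)) (hσ : φ.comp σ = φ) :
    ∃ (t : C(α, ℝ)) (m : ℤ), (∀ x, Circle.exp (t x) = φ x) ∧
      ∀ x, t (σ x) = t x + m * (2 * Real.pi) := by
  obtain ⟨x₀⟩ : Nonempty α := inferInstance
  obtain ⟨t, ⟨-, ht⟩, -⟩ := Circle.isCoveringMap_exp.existsUnique_continuousMap_lifts φ x₀
    (φ x₀ : ℂ).arg (Circle.exp_arg _)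
  replace ht (x) : Circle.exp (t x) = φ x := congrFun ht x
  have hshift (x) : Circle.exp (t (σ x)) = Circle.exp (t x) := by
    rw [ht, ht]; exact DFunLike.congr_fun hσ x
  obtain ⟨m, hm⟩ := Circle.exp_eq_exp.1 (hshift x₀)
  refine ⟨t, m, ht, congrFun (Circle.isCoveringMap_exp.eq_of_comp_eq
    (by fun_prop) (by fun_prop) (funext fun x ↦ ?_) x₀ hm)⟩
  exact (hshift x).trans (Circle.exp_eq_exp.2 ⟨-m, by push_cast; ring⟩)

lemma subset_left_of_isPreconnected_of_isClosed {s t t' : Set α} (hs : IsPreconnected s)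
    (ht : IsClosed t) (ht' : IsClosed t') (htt' : Disjoint t t') (hsub : s ⊆ t ∪ t')
    (hst : (s ∩ t).Nonempty) : s ⊆ t := by
  refine Disjoint.subset_left_of_subset_union hsub (disjoint_iff_inter_eq_empty.2 ?_)
  by_contra hne
  obtain ⟨x, -, hx⟩ := isPreconnected_closed_iff.1 hs t t' ht ht' hsub hst
    (nonempty_iff_ne_empty.2 hne)
  exact htt'.ne_of_mem hx.1 hx.2 rfl

lemma nullhomotopic_of_nullhomotopic_union [Nonempty β] {s t : Set α} (hs : IsClosed s)
    (ht : IsClosed t) (hst : Disjoint s t) {φ : C(β, s)}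
    (hφ : ((ContinuousMap.inclusion (subset_union_left (t := t))).comp φ).Nullhomotopic) :
    φ.Nullhomotopic := by
  obtain ⟨b, ⟨H⟩⟩ := hφ
  have hpath (x : β) : range (fun r ↦ (H (r, x) : α)) ⊆ s := by
    refine subset_left_of_isPreconnected_of_isClosed (isPreconnected_range (by fun_prop)) hs ht hst
      (range_subset_iff.2 fun r ↦ (H (r, x)).2) ⟨φ x, ⟨0, ?_⟩, (φ x).2⟩
    exact congrArg Subtype.val (H.apply_zero x)
  have hb : (b : α) ∈ s := by
    obtain ⟨x⟩ := ‹Nonempty β›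
    exact hpath x ⟨1, congrArg Subtype.val (H.apply_one x)⟩
  refine ⟨⟨b, hb⟩, ⟨⟨⟨fun q ↦ ⟨H q, hpath q.2 ⟨q.1, rfl⟩⟩, by fun_prop⟩, fun x ↦ ?_, fun x ↦ ?_⟩⟩⟩
  · exact Subtype.ext (congrArg (fun z : ↥(s ∪ t) ↦ (z : α)) (H.apply_zero x))
  · exact Subtype.ext (congrArg (fun z : ↥(s ∪ t) ↦ (z : α)) (H.apply_one x))

end General

open unitInterval AffineMap

/-- The centre of the removed disc. -/
def center : ℝ × ℝ := (1 / 2, 0)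

lemma dist_center (p : ℝ × ℝ) : dist p center = max |p.1 - 1 / 2| |p.2| := by
  simp [center, Prod.dist_eq, Real.dist_eq]

lemma mem_Sq {p : ℝ × ℝ} : p ∈ Sq ↔ |p.1 - 1 / 2| ≤ 1 / 2 ∧ |p.2| ≤ 1 := by
  simp only [Sq, mem_prod, mem_Icc, abs_le]
  constructor <;> rintro ⟨⟨_, _⟩, _, _⟩ <;> refine ⟨⟨?_, ?_⟩, ?_, ?_⟩ <;> linarith

lemma mem_Sq_of_dist_le {p : ℝ × ℝ} (hp : dist p center ≤ 1 / 2) : p ∈ Sq := by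
  rw [dist_center, max_le_iff] at hp
  exact mem_Sq.2 ⟨hp.1, by linarith⟩

lemma center_mem_Sq : center ∈ Sq := mem_Sq_of_dist_le (by simp)

lemma homothety_mem_Sq {p : ℝ × ℝ} (hp : p ∈ Sq) {k : ℝ} (hk : k ∈ Icc (0 : ℝ) 1) :
    homothety center k p ∈ Sq :=
  ((convex_Icc 0 1).prod (convex_Icc (-1) 1)).lineMap_mem center_mem_Sq hp hk

lemma continuous_qm : Continuous qm := continuous_quot_mk

/-- The nearest-point retraction of the plane onto the square. -/
def retractSq : C(ℝ × ℝ, Sq) where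
  toFun p := ⟨(projIcc 0 1 zero_le_one p.1, projIcc (-1) 1 (by norm_num) p.2),
    Subtype.property _, Subtype.property _⟩
  continuous_toFun := by
    refine .subtype_mk (.prodMk ?_ ?_) _
    all_goals exact continuous_subtype_val.comp (continuous_projIcc.comp (by fun_prop))

lemma retractSq_coe (p : Sq) : retractSq p = p := by
  refine Subtype.ext (Prod.ext ?_ ?_)
  · exact congrArg Subtype.val (projIcc_of_mem zero_le_one p.2.1)
  · exact congrArg Subtype.val (projIcc_of_mem (by norm_num) p.2.2)

/-- The quotient map `qm`, extended to the plane through the retraction onto the square. -/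
def chart : C(ℝ × ℝ, M) := .comp ⟨qm, continuous_qm⟩ retractSq

lemma chart_coe (p : Sq) : chart p = qm p := congrArg qm (retractSq_coe p)

lemma exists_chart_eq (m : M) : ∃ p ∈ Sq, chart p = m :=
  Quot.inductionOn m fun p ↦ ⟨p, p.2, chart_coe p⟩

lemma chart_zero_eq_chart_one (y : ℝ) : chart (0, y) = chart (1, -y) := by
  refine Quot.sound (Or.inr (Or.inl ⟨?_, ?_, ?_⟩))
  · simp [retractSq]
  · simp [retractSq]
  · simp only [retractSq, ContinuousMap.coe_mk, coe_projIcc]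
    grind

section Lift

variable {Z S : Type*} [TopologicalSpace Z] [TopologicalSpace S]

/-- The map induced on the Möbius band by a map of the plane respecting the identification. -/
def M.lift (h : C(ℝ × ℝ, Z)) (hedge : ∀ y, h (0, y) = h (1, -y)) : C(M, Z) where
  toFun := Quot.lift (fun p : Sq ↦ h p) <| by
    rintro ⟨⟨x, y⟩, hp⟩ ⟨⟨x', y'⟩, hq⟩ (h | ⟨h0, h1, h2⟩ | ⟨h1, h0, h2⟩)
    · exact congrArg _ h
    · dsimp only at h0 h1 h2 ⊢
      rw [h0, h1, h2, hedge, neg_neg]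
    · dsimp only at h0 h1 h2 ⊢
      rw [h0, h1, h2, hedge, neg_neg]
  continuous_toFun := continuous_quot_lift _ (h.continuous.comp continuous_subtype_val)

lemma M.lift_chart (h : C(ℝ × ℝ, Z)) (hedge : ∀ y, h (0, y) = h (1, -y)) {p : ℝ × ℝ}
    (hp : p ∈ Sq) : M.lift h hedge (chart p) = h p := by
  rw [chart_coe ⟨p, hp⟩]
  rfl

variable [LocallyCompactSpace S]

/-- `M.lift` for a family of maps with parameter in `S`. -/
def M.liftFamily (h : C(S × (ℝ × ℝ), Z)) (hedge : ∀ s y, h (s, 0, y) = h (s, 1, -y)) :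
    C(S × M, Z) :=
  (M.lift (h.comp .prodSwap).curry fun y ↦ ContinuousMap.ext fun s ↦ hedge s y).uncurry.comp
    .prodSwap

lemma M.liftFamily_chart (h : C(S × (ℝ × ℝ), Z)) (hedge : ∀ s y, h (s, 0, y) = h (s, 1, -y))
    (s : S) {p : ℝ × ℝ} (hp : p ∈ Sq) : M.liftFamily h hedge (s, chart p) = h (s, p) :=
  DFunLike.congr_fun (M.lift_chart (h.comp .prodSwap).curry
    (fun y ↦ ContinuousMap.ext fun s ↦ hedge s y) hp) s

end Lift

/-- The distance to the centre of the hole in the sup metric, which is the metric of `ℝ × ℝ` that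
`Bdisc` and `Scirc` refer to; the removed disc is therefore a square. -/
def radius : C(M, ℝ) :=
  M.lift ⟨fun p ↦ dist p center, by fun_prop⟩ fun y ↦ by
    norm_num [dist_center, abs_of_neg]

/-- The distance `|y|` to the core circle of the Möbius band. -/
def height : C(M, ℝ) := M.lift ⟨fun p ↦ |p.2|, by fun_prop⟩ fun y ↦ (abs_neg y).symm

lemma radius_chart {p : ℝ × ℝ} (hp : p ∈ Sq) : radius (chart p) = dist p center :=
  M.lift_chart _ _ hp

lemma height_chart {p : ℝ × ℝ} (hp : p ∈ Sq) : height (chart p) = |p.2| := M.lift_chart _ _ hp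

lemma height_le_radius (m : M) : height m ≤ radius m := by
  obtain ⟨p, hp, rfl⟩ := exists_chart_eq m
  rw [height_chart hp, radius_chart hp, dist_center]
  exact le_max_right _ _

lemma mem_Xset {m : M} : m ∈ Xset ↔ 1 / 4 ≤ radius m := by
  refine ⟨fun hm ↦ ?_, ?_⟩
  · obtain ⟨p, hp, rfl⟩ := exists_chart_eq m
    rw [radius_chart hp]
    exact not_lt.1 fun hlt ↦ hm ⟨⟨p, hp⟩, hlt, (chart_coe _).symm⟩
  · rintro hm ⟨p, hp, rfl⟩
    rw [← chart_coe, radius_chart p.2] at hm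
    exact hm.not_gt hp

lemma mem_C1 {x : X} : x ∈ C1 ↔ height x = 1 := by
  constructor
  · rintro ⟨p, hp, hy⟩
    rw [← hp, ← chart_coe, height_chart p.2]
    exact (abs_eq zero_le_one).2 hy
  · intro hx
    obtain ⟨p, hp, hpx⟩ := exists_chart_eq x.1
    rw [← hpx, height_chart hp] at hx
    exact ⟨⟨p, hp⟩, (chart_coe _).symm.trans hpx, (abs_eq zero_le_one).1 hx⟩

lemma mem_C2 {x : X} : x ∈ C2 ↔ radius x = 1 / 4 := by
  constructor
  · rintro ⟨p, hp, hy⟩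
    rw [← hp, ← chart_coe, radius_chart p.2]
    exact hy
  · intro hx
    obtain ⟨p, hp, hpx⟩ := exists_chart_eq x.1
    rw [← hpx, radius_chart hp] at hx
    exact ⟨⟨p, hp⟩, (chart_coe _).symm.trans hpx, hx⟩

lemma isClosed_C1 : IsClosed C1 := by
  have h : C1 = (fun x : X ↦ height x) ⁻¹' {1} := Set.ext fun _ ↦ mem_C1
  exact h ▸ isClosed_singleton.preimage (by fun_prop)

lemma isClosed_C2 : IsClosed C2 := by
  have h : C2 = (fun x : X ↦ radius x) ⁻¹' {1 / 4} := Set.ext fun _ ↦ mem_C2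
  exact h ▸ isClosed_singleton.preimage (by fun_prop)

lemma disjoint_C1_C2 : Disjoint C1 C2 := by
  refine Set.disjoint_left.2 fun x h1 h2 ↦ ?_
  linarith [height_le_radius x, mem_C1.1 h1, mem_C2.1 h2]

/-- The nearest-point retraction of the line onto the unit interval. -/
def clamp : C(ℝ, I) := ⟨projIcc 0 1 zero_le_one, continuous_projIcc⟩

lemma clamp_of_nonpos {x : ℝ} (hx : x ≤ 0) : clamp x = 0 := projIcc_of_le_left zero_le_one hx

lemma clamp_of_one_le {x : ℝ} (hx : 1 ≤ x) : clamp x = 1 := projIcc_of_right_le zero_le_one hx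

lemma coe_clamp_of_mem {x : ℝ} (h0 : 0 ≤ x) (h1 : x ≤ 1) : (clamp x : ℝ) = x :=
  congrArg Subtype.val (projIcc_of_mem zero_le_one ⟨h0, h1⟩)

section Radial

/-- Scaling about the centre of the hole by a factor that depends on a time and on the radius. -/
def radial (k : C(I × ℝ, ℝ)) (hk : ∀ s r, 1 / 2 ≤ r → k (s, r) = 1) : C(I × M, M) :=
  M.liftFamily ⟨fun q ↦ chart (homothety center (k (q.1, dist q.2 center)) q.2), by
    simp only [homothety_apply, vsub_eq_sub, vadd_eq_add]; fun_prop⟩ fun s y ↦ by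
    have h (x : ℝ) (hx : |x - 1 / 2| = 1 / 2) (y : ℝ) : k (s, dist (x, y) center) = 1 :=
      hk _ _ (hx.ge.trans (by rw [dist_center]; exact le_max_left _ _))
    simpa [h 0 (by norm_num [abs_of_neg]), h 1 (by norm_num)] using chart_zero_eq_chart_one y

variable {k : C(I × ℝ, ℝ)} {hk : ∀ s r, 1 / 2 ≤ r → k (s, r) = 1} {s : I} {m : M}

lemma radial_chart {p : ℝ × ℝ} (hp : p ∈ Sq) :
    radial k hk (s, chart p) = chart (homothety center (k (s, radius (chart p))) p) := by
  rw [radius_chart hp]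
  exact M.liftFamily_chart _ _ s hp

lemma radial_eq_self (h : k (s, radius m) = 1) : radial k hk (s, m) = m := by
  obtain ⟨p, hp, rfl⟩ := exists_chart_eq m
  rw [radial_chart hp, h, homothety_one, id_apply]

lemma radial_eq_center (h : k (s, radius m) = 0) : radial k hk (s, m) = chart center := by
  obtain ⟨p, hp, rfl⟩ := exists_chart_eq m
  rw [radial_chart hp, h, homothety_zero, const_apply]

lemma dist_homothety_center_eq {r : ℝ} (hr : 0 ≤ r) (p : ℝ × ℝ) :
    dist (homothety center r p) center = r * dist p center := by
  rw [dist_homothety_center, Real.norm_of_nonneg hr, dist_comm]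

lemma radius_radial (h0 : 0 ≤ k (s, radius m))
    (h1 : k (s, radius m) ≤ 1 ∨ k (s, radius m) * radius m ≤ 1 / 2) :
    radius (radial k hk (s, m)) = k (s, radius m) * radius m := by
  obtain ⟨p, hp, rfl⟩ := exists_chart_eq m
  have hmem : homothety center (k (s, radius (chart p))) p ∈ Sq := by
    refine h1.elim (fun h ↦ homothety_mem_Sq hp ⟨h0, h⟩) fun h ↦ mem_Sq_of_dist_le ?_
    rwa [dist_homothety_center_eq h0, ← radius_chart hp]
  rw [radial_chart hp, radius_chart hmem, dist_homothety_center_eq h0, radius_chart hp]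

lemma height_radial_le (h : k (s, radius m) ∈ Icc (0 : ℝ) 1) :
    height (radial k hk (s, m)) ≤ height m := by
  obtain ⟨p, hp, rfl⟩ := exists_chart_eq m
  rw [radial_chart hp, height_chart (homothety_mem_Sq hp h), height_chart hp, homothety_apply]
  simpa [center, abs_mul, abs_of_nonneg h.1] using mul_le_of_le_one_left (abs_nonneg p.2) h.2

end Radial

section PushOut

/-- The scaling factor of `pushOut`. -/
def pushOutFactor : C(I × ℝ, ℝ) := ⟨fun q ↦ 1 + q.1 / 2 * clamp (2 - 4 * q.2), by fun_prop⟩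

lemma pushOutFactor_of_half_le (s : I) {r : ℝ} (hr : 1 / 2 ≤ r) : pushOutFactor (s, r) = 1 := by
  simp [pushOutFactor, clamp_of_nonpos (x := 2 - 4 * r) (by linarith)]

lemma one_le_pushOutFactor (q : I × ℝ) : 1 ≤ pushOutFactor q :=
  le_add_of_nonneg_right (mul_nonneg (div_nonneg q.1.2.1 zero_le_two) (clamp _).2.1)

lemma pushOutFactor_of_mem (s : I) {r : ℝ} (hr : r ∈ Icc (1 / 4 : ℝ) (1 / 2)) :
    pushOutFactor (s, r) = 1 + s * (1 - 2 * r) := by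
  simp only [pushOutFactor, ContinuousMap.coe_mk]
  rw [coe_clamp_of_mem (by linarith [hr.2]) (by linarith [hr.1])]
  ring

lemma radius_radial_pushOutFactor (s : I) {m : M} (hm : m ∈ Xset) :
    radius (radial pushOutFactor (fun s _ ↦ pushOutFactor_of_half_le s) (s, m)) =
      pushOutFactor (s, radius m) * radius m := by
  rw [mem_Xset] at hm
  refine radius_radial (zero_le_one.trans (one_le_pushOutFactor _)) ?_
  rcases le_total (1 / 2) (radius m) with h | h
  · exact .inl (pushOutFactor_of_half_le s h).le
  · refine .inr ?_
    rw [pushOutFactor_of_mem s ⟨hm, h⟩]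
    nlinarith [mul_nonneg (sub_nonneg.2 s.2.2) (sub_nonneg.2 h), sq_nonneg (radius m - 1 / 2)]

/-- A deformation of `X` that enlarges the hole, fixing every point at distance at least `1 / 2`
from its centre. -/
def pushOut : C(I × X, X) where
  toFun q := ⟨radial pushOutFactor (fun s _ ↦ pushOutFactor_of_half_le s) (q.1, q.2), by
    rw [mem_Xset, radius_radial_pushOutFactor _ q.2.2]
    exact (mem_Xset.1 q.2.2).trans (le_mul_of_one_le_left
      (by linarith [mem_Xset.1 q.2.2]) (one_le_pushOutFactor _))⟩
  continuous_toFun := by fun_prop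

lemma radius_pushOut (s : I) (x : X) :
    radius (pushOut (s, x)) = pushOutFactor (s, radius x) * radius x :=
  radius_radial_pushOutFactor s x.2

lemma pushOut_zero (x : X) : pushOut (0, x) = x :=
  Subtype.ext (radial_eq_self (by simp [pushOutFactor]))

lemma pushOut_of_half_le (s : I) {x : X} (hx : 1 / 2 ≤ radius x) : pushOut (s, x) = x :=
  Subtype.ext (radial_eq_self (pushOutFactor_of_half_le s hx))

lemma radius_pushOut_of_mem_C2 (s : I) {x : X} (hx : x ∈ C2) :
    radius (pushOut (s, x)) = (1 + s / 2) / 4 := by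
  rw [radius_pushOut, mem_C2.1 hx, pushOutFactor_of_mem s (by norm_num)]
  ring

lemma le_radius_pushOut_one (x : X) : 3 / 8 ≤ radius (pushOut (1, x)) := by
  have hx := mem_Xset.1 x.2
  rcases le_total (1 / 2) (radius x) with h | h
  · rw [pushOut_of_half_le 1 h]
    linarith
  · rw [radius_pushOut, pushOutFactor_of_mem 1 ⟨hx, h⟩, Icc.coe_one]
    nlinarith

end PushOut

section Shrink

/-- The scaling factor of `shrink`. -/
def shrinkFactor : C(I × ℝ, ℝ) := ⟨fun q ↦ 1 - q.1 * (1 - clamp (8 * q.2 - 3)), by fun_prop⟩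

lemma shrinkFactor_of_half_le (s : I) {r : ℝ} (hr : 1 / 2 ≤ r) : shrinkFactor (s, r) = 1 := by
  simp [shrinkFactor, clamp_of_one_le (x := 8 * r - 3) (by linarith)]

lemma shrinkFactor_mem (q : I × ℝ) : shrinkFactor q ∈ Icc (0 : ℝ) 1 := by
  have h := (clamp (8 * q.2 - 3)).2
  exact Icc.mem_iff_one_sub_mem.1
    (unitInterval.mul_mem q.1.2 (Icc.mem_iff_one_sub_mem.1 h))

/-- A deformation of the Möbius band that collapses the disc of radius `3 / 8` about the centre of
the hole, fixing every point at distance at least `1 / 2` from the centre. -/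
def shrink : C(I × M, M) := radial shrinkFactor fun s _ ↦ shrinkFactor_of_half_le s

lemma shrink_zero (m : M) : shrink (0, m) = m := radial_eq_self (by simp [shrinkFactor])

lemma shrink_of_half_le (s : I) {m : M} (hm : 1 / 2 ≤ radius m) : shrink (s, m) = m :=
  radial_eq_self (shrinkFactor_of_half_le s hm)

lemma shrink_one_of_le {m : M} (hm : radius m ≤ 3 / 8) : shrink (1, m) = chart center :=
  radial_eq_center (by simp [shrinkFactor, clamp_of_nonpos (x := 8 * radius m - 3) (by linarith)])

lemma radius_shrink_le (s : I) (m : M) : radius (shrink (s, m)) ≤ radius m := by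
  have hs := shrinkFactor_mem (s, radius m)
  have hm : 0 ≤ radius m := by
    obtain ⟨p, hp, rfl⟩ := exists_chart_eq m
    exact radius_chart hp ▸ dist_nonneg
  exact (radius_radial hs.1 (.inl hs.2)).trans_le (mul_le_of_le_one_left hm hs.2)

lemma height_shrink_le (s : I) (m : M) : height (shrink (s, m)) ≤ height m :=
  height_radial_le (shrinkFactor_mem _)

end Shrink

section Squeeze

/-- Moves a real number towards its projection to the interval `[-2/5, 2/5]`. -/
def squeezeReal : C(I × ℝ, ℝ) :=
  ⟨fun q ↦ q.2 - q.1 * (q.2 - max (-(2 / 5)) (min (2 / 5) q.2)), by fun_prop⟩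

lemma squeezeReal_of_abs_le (s : I) {y : ℝ} (hy : |y| ≤ 2 / 5) : squeezeReal (s, y) = y := by
  rw [abs_le] at hy
  simp [squeezeReal, hy]

lemma squeezeReal_neg (s : I) (y : ℝ) : squeezeReal (s, -y) = -squeezeReal (s, y) := by
  have hproj : max (-(2 / 5)) (min (2 / 5) (-y)) = -max (-(2 / 5)) (min (2 / 5) y) := by grind
  simp only [squeezeReal, ContinuousMap.coe_mk, hproj]
  ring

lemma abs_squeezeReal_of_le_abs (s : I) {y : ℝ} (hy : 2 / 5 ≤ |y|) :
    |squeezeReal (s, y)| = |y| - s * (|y| - 2 / 5) := by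
  wlog h : 0 ≤ y generalizing y
  · simpa [squeezeReal_neg] using this (y := -y) (by rwa [abs_neg]) (by linarith)
  rw [abs_of_nonneg h] at hy ⊢
  have hs : squeezeReal (s, y) = y - s * (y - 2 / 5) := by
    simp only [squeezeReal, ContinuousMap.coe_mk, min_eq_left hy]
    norm_num
  rw [hs, abs_of_nonneg]
  nlinarith [mul_le_mul_of_nonneg_right s.2.2 (sub_nonneg.2 hy)]

lemma abs_squeezeReal_mem (s : I) (y : ℝ) :
    |squeezeReal (s, y)| ∈ Icc (min (2 / 5) |y|) |y| := by
  rcases le_total |y| (2 / 5) with hy | hy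
  · simp [squeezeReal_of_abs_le s hy]
  · rw [abs_squeezeReal_of_le_abs s hy, min_eq_left hy]
    constructor
    · nlinarith [mul_le_mul_of_nonneg_right s.2.2 (sub_nonneg.2 hy)]
    · exact sub_le_self _ (mul_nonneg s.2.1 (sub_nonneg.2 hy))

/-- The vertical deformation of the Möbius band induced by `squeezeReal`. -/
def squeezeM : C(I × M, M) :=
  M.liftFamily ⟨fun q ↦ chart (q.2.1, squeezeReal (q.1, q.2.2)), by fun_prop⟩ fun s y ↦ by
    simpa only [ContinuousMap.coe_mk, squeezeReal_neg] using chart_zero_eq_chart_one _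

lemma squeezeM_chart (s : I) {p : ℝ × ℝ} (hp : p ∈ Sq) :
    squeezeM (s, chart p) = chart (p.1, squeezeReal (s, p.2)) := M.liftFamily_chart _ _ s hp

lemma squeeze_mem_Sq (s : I) {p : ℝ × ℝ} (hp : p ∈ Sq) : (p.1, squeezeReal (s, p.2)) ∈ Sq :=
  mem_Sq.2 ⟨(mem_Sq.1 hp).1, (abs_squeezeReal_mem s p.2).2.trans (mem_Sq.1 hp).2⟩

lemma squeezeM_mem_Xset (s : I) {m : M} (hm : m ∈ Xset) : squeezeM (s, m) ∈ Xset := by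
  obtain ⟨p, hp, rfl⟩ := exists_chart_eq m
  rw [mem_Xset, radius_chart hp, dist_center, le_max_iff] at hm
  rw [squeezeM_chart s hp, mem_Xset, radius_chart (squeeze_mem_Sq s hp), dist_center, le_max_iff]
  refine hm.imp_right fun h ↦ ?_
  exact (le_min (by norm_num) h).trans (abs_squeezeReal_mem s p.2).1

/-- A deformation of `X` that compresses it vertically into the strip of height `2 / 5`. -/
def squeeze : C(I × X, X) :=
  ⟨fun q ↦ ⟨squeezeM (q.1, q.2), squeezeM_mem_Xset q.1 q.2.2⟩, by fun_prop⟩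

lemma squeeze_of_height_le (s : I) {x : X} (hx : height x ≤ 2 / 5) : squeeze (s, x) = x := by
  obtain ⟨p, hp, hpx⟩ := exists_chart_eq x.1
  refine Subtype.ext (?_ : squeezeM (s, x) = x)
  rw [← hpx, height_chart hp] at hx
  rw [← hpx, squeezeM_chart s hp, squeezeReal_of_abs_le s hx]

lemma squeeze_of_mem_C2 (s : I) {x : X} (hx : x ∈ C2) : squeeze (s, x) = x :=
  squeeze_of_height_le s (by linarith [height_le_radius x, mem_C2.1 hx])

lemma squeeze_zero (x : X) : squeeze (0, x) = x := by
  obtain ⟨p, hp, hpx⟩ := exists_chart_eq x.1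
  refine Subtype.ext (?_ : squeezeM (0, x) = x)
  rw [← hpx, squeezeM_chart 0 hp]
  simp [squeezeReal]

lemma height_squeeze_one_le (x : X) : height (squeeze (1, x)) ≤ 2 / 5 := by
  obtain ⟨p, hp, hpx⟩ := exists_chart_eq x.1
  change height (squeezeM (1, x)) ≤ 2 / 5
  rw [← hpx, squeezeM_chart 1 hp, height_chart (squeeze_mem_Sq 1 hp)]
  rcases le_total |p.2| (2 / 5) with h | h
  · exact (abs_squeezeReal_mem 1 p.2).2.trans h
  · simp [abs_squeezeReal_of_le_abs 1 h]

end Squeeze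

/-- A map to the plane that is `p ↦ p - center` near the hole; the factor `clamp _`, which vanishes
for `x = 0` and `x = 1`, makes it descend to the Möbius band. -/
def holeCoord : C(M, ℝ × ℝ) :=
  M.lift ⟨fun p ↦ (clamp (2 - 4 * |p.1 - 1 / 2|) : ℝ) • (p - center), by fun_prop⟩ fun y ↦ by
    have h0 : clamp (2 - 4 * |0 - 1 / 2|) = 0 := clamp_of_nonpos (by norm_num [abs_of_neg])
    have h1 : clamp (2 - 4 * |1 - 1 / 2|) = 0 := clamp_of_nonpos (by norm_num)
    simp only [ContinuousMap.coe_mk, h0, h1, Icc.coe_zero, zero_smul]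

lemma holeCoord_chart {p : ℝ × ℝ} (hp : dist p center ≤ 1 / 4) :
    holeCoord (chart p) = p - center := by
  have ha : |p.1 - 1 / 2| ≤ 1 / 4 := (le_max_left _ _).trans (dist_center p ▸ hp)
  refine (M.lift_chart _ _ (mem_Sq_of_dist_le (by linarith))).trans ?_
  simp only [ContinuousMap.coe_mk]
  rw [clamp_of_one_le (by linarith), Icc.coe_one, one_smul]

lemma chart_center_add_holeCoord {m : M} (hm : radius m ≤ 1 / 4) :
    chart (center + holeCoord m) = m := by
  obtain ⟨p, hp, rfl⟩ := exists_chart_eq m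
  rw [radius_chart hp] at hm
  rw [holeCoord_chart hm, add_sub_cancel]

lemma norm_holeCoord {m : M} (hm : radius m ≤ 1 / 4) : ‖holeCoord m‖ = radius m := by
  obtain ⟨p, hp, rfl⟩ := exists_chart_eq m
  rw [radius_chart hp] at hm ⊢
  rw [holeCoord_chart hm, dist_eq_norm]

lemma holeCoord_mem_sphere {m : M} (hm : radius m = 1 / 4) :
    holeCoord m ∈ Metric.sphere 0 (1 / 4) := by
  rw [mem_sphere_zero_iff_norm, norm_holeCoord hm.le, hm]

/-- The boundary circle `C2`, parametrised by a sphere about the origin. -/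
def holePoint : C(Metric.sphere (0 : ℝ × ℝ) (1 / 4), C2) :=
  have hdist (v : Metric.sphere (0 : ℝ × ℝ) (1 / 4)) : dist (center + v) center = 1 / 4 := by
    rw [dist_self_add_left, mem_sphere_zero_iff_norm.1 v.2]
  have hradius (v : Metric.sphere (0 : ℝ × ℝ) (1 / 4)) : radius (chart (center + v)) = 1 / 4 := by
    rw [radius_chart (mem_Sq_of_dist_le (by linarith [hdist v])), hdist]
  ⟨fun v ↦ ⟨⟨chart (center + v), mem_Xset.2 (hradius v).ge⟩, mem_C2.2 (hradius v)⟩, by fun_prop⟩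

lemma holePoint_holeCoord (x : C2) :
    holePoint ⟨holeCoord x, holeCoord_mem_sphere (mem_C2.1 x.2)⟩ = x :=
  Subtype.ext (Subtype.ext (chart_center_add_holeCoord (mem_C2.1 x.2).le))

instance : Nonempty C2 :=
  ⟨holePoint ⟨(1 / 4, 0), by simp [Prod.norm_def]⟩⟩

lemma exists_extension_over_hole (f : C(X, X)) (h21 : MapsTo f C2 C1)
    (h2 : (restrictMap f h21).Nullhomotopic) :
    ∃ F : C(M, X), (∀ x : X, F x = f x) ∧ ∀ m, radius m ≤ 1 / 4 → F m ∈ C1 := by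
  obtain ⟨Φ, hΦ⟩ := exists_extension_of_nullhomotopic_sphere (by norm_num : (0 : ℝ) < 1 / 4)
    (h2.comp_left holePoint)
  have hΦf (m : M) (hm : radius m = 1 / 4) : (Φ (holeCoord m) : X) = f ⟨m, mem_Xset.2 hm.ge⟩ := by
    rw [hΦ ⟨holeCoord m, holeCoord_mem_sphere hm⟩]
    exact congrArg (fun x : C2 ↦ f x) (holePoint_holeCoord ⟨⟨m, mem_Xset.2 hm.ge⟩, mem_C2.2 hm⟩)
  let F : C(M, X) := ⟨_, continuous_dite_le continuous_const radius.continuous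
    (F := fun m ↦ f ⟨m, mem_Xset.2 m.2⟩) (G := fun m ↦ Φ (holeCoord m)) (by fun_prop) (by fun_prop)
    fun m hm ↦ (hΦf m hm.symm).symm⟩
  have hF (x : X) : F x = f x := dif_pos (mem_Xset.1 x.2)
  refine ⟨F, hF, fun m hm ↦ ?_⟩
  rcases hm.eq_or_lt with h | h
  · exact hF ⟨m, mem_Xset.2 h.ge⟩ ▸ h21 (mem_C2.2 h)
  · have hm : F m = Φ (holeCoord m) := dif_neg h.not_ge
    exact hm ▸ (Φ (holeCoord m)).2

section Complex

open Complex

/-- The radial projection of the punctured complex plane to the unit circle. -/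
def direction : C({z : ℂ // z ≠ 0}, Circle) where
  toFun z := ⟨z / ‖(z : ℂ)‖, by
    simp [Submonoid.unitSphere, norm_ne_zero_iff.2 z.2]⟩
  continuous_toFun := by
    refine .subtype_mk (.div (by fun_prop) (by fun_prop) fun z ↦ ?_) _
    simpa using z.2

lemma coe_direction (z : {z : ℂ // z ≠ 0}) : (direction z : ℂ) = z / ‖(z : ℂ)‖ := rfl

/-- On the unit circle `z ↦ -z²` on the upper half, collapsing the lower half to `-1`; a map of
degree one for which `1` has the single preimage `i`. -/
def fold : C(ℂ, ℂ) := ⟨fun z ↦ -z * (z.re + |z.im| * Complex.I), by fun_prop⟩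

lemma fold_apply (z : ℂ) : fold z = -z * (z.re + |z.im| * Complex.I) := rfl

lemma fold_re (z : ℂ) : (fold z).re = z.im * |z.im| - z.re ^ 2 := by
  simp only [fold_apply, neg_mul, neg_re, mul_re, add_re, add_im, mul_im, ofReal_re, ofReal_im,
    I_re, I_im, mul_zero, mul_one, sub_self, add_zero, zero_add]
  ring

lemma fold_im (z : ℂ) : (fold z).im = -(z.re * (z.im + |z.im|)) := by
  simp only [fold_apply, neg_mul, neg_im, mul_im, add_re, add_im, mul_re, ofReal_re, ofReal_im,
    I_re, I_im, mul_zero, mul_one, sub_self, add_zero, zero_add]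
  ring

lemma norm_fold (z : ℂ) : ‖fold z‖ = ‖z‖ ^ 2 := by
  have h : ‖(z.re + |z.im| * Complex.I : ℂ)‖ = ‖z‖ := by
    rw [norm_add_mul_I, sq_abs, ← norm_add_mul_I, re_add_im]
  rw [fold_apply, norm_mul, norm_neg, h, sq]

lemma fold_ne_zero {z : ℂ} (hz : z ≠ 0) : fold z ≠ 0 := by
  rw [← norm_ne_zero_iff, norm_fold]
  exact pow_ne_zero 2 (norm_ne_zero_iff.2 hz)

lemma fold_real_smul {r : ℝ} (hr : 0 ≤ r) (z : ℂ) : fold (r * z) = r ^ 2 * fold z := by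
  simp only [fold_apply, re_ofReal_mul, im_ofReal_mul, abs_mul, abs_of_nonneg hr, ofReal_mul]
  ring

lemma re_eq_zero_and_im_pos_of_direction_fold_eq_one {z : ℂ} (hz : z ≠ 0)
    (h : direction ⟨fold z, fold_ne_zero hz⟩ = 1) : z.re = 0 ∧ 0 < z.im := by
  have hn : fold z = ‖fold z‖ := by
    have hdiv : fold z / ‖fold z‖ = 1 := congrArg Subtype.val h
    exact (div_eq_one_iff_eq (by simpa using fold_ne_zero hz)).1 hdiv
  have hpos : 0 < z.im * |z.im| - z.re ^ 2 := by
    rw [← fold_re, hn, ofReal_re]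
    exact norm_pos_iff.2 (fold_ne_zero hz)
  have him : z.re * (z.im + |z.im|) = 0 := by
    rw [← neg_eq_zero, ← fold_im, hn, ofReal_im]
  have hz_im : 0 < z.im := by
    by_contra! hle
    nlinarith [abs_nonneg z.im, sq_nonneg z.re]
  rw [abs_of_pos hz_im] at him
  exact ⟨(mul_eq_zero.1 him).resolve_right (by linarith), hz_im⟩

lemma fold_circle (z : Circle) :
    fold z = Circle.exp Real.pi * z * Circle.exp (Real.arccos (z : ℂ).re) := by
  have hre : |(z : ℂ).re| ≤ 1 := (abs_re_le_norm _).trans z.norm_coe.le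
  have hsin : Real.sin (Real.arccos (z : ℂ).re) = |(z : ℂ).im| := by
    rw [Real.sin_arccos, ← Real.sqrt_sq_eq_abs]
    congr 1
    have hz := z.normSq_coe
    rw [normSq_apply] at hz
    linarith
  rw [fold_apply, Circle.coe_exp, Circle.coe_exp, exp_pi_mul_I, exp_mul_I, ← ofReal_cos,
    ← ofReal_sin, hsin, Real.cos_arccos (abs_le.1 hre).1 (abs_le.1 hre).2]
  ring

lemma direction_fold {z : ℂ} (hz : z ≠ 0) :
    direction ⟨fold z, fold_ne_zero hz⟩ =
      Circle.exp Real.pi * direction ⟨z, hz⟩ * Circle.exp (Real.arccos (z / ‖z‖).re) := by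
  have hne : (‖z‖ : ℂ) ≠ 0 := by simpa using hz
  have hscale : fold z = ‖z‖ ^ 2 * fold (direction ⟨z, hz⟩) := by
    rw [← fold_real_smul (norm_nonneg z), coe_direction, mul_div_cancel₀ _ hne]
  refine Circle.ext ?_
  rw [coe_direction, Circle.coe_mul, Circle.coe_mul, ← coe_direction ⟨z, hz⟩, ← fold_circle,
    div_eq_iff (by simpa using fold_ne_zero hz)]
  simp only [norm_fold, ofReal_pow]
  rw [hscale, mul_comm]

end Complex

open Complex (equivRealProdCLM)

/-- The position of a point of the square relative to the centre of the hole, as a complex number;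
the factor `clamp _`, which vanishes for `x = 0` and `x = 1`, makes its `fold` descend to the Möbius
band. -/
def planeCoord : C(ℝ × ℝ, ℂ) :=
  ⟨fun p ↦ equivRealProdCLM.symm (p.1 - 1 / 2, p.2 * clamp (2 - 4 * |p.1 - 1 / 2|)), by fun_prop⟩

lemma planeCoord_of_abs_le {p : ℝ × ℝ} (hp : |p.1 - 1 / 2| ≤ 1 / 4) :
    planeCoord p = equivRealProdCLM.symm (p - center) := by
  simp only [planeCoord, ContinuousMap.coe_mk]
  rw [clamp_of_one_le (by linarith), Icc.coe_one, mul_one]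
  exact congrArg _ (Prod.ext rfl (sub_zero p.2).symm)

lemma re_planeCoord (p : ℝ × ℝ) : (planeCoord p).re = p.1 - 1 / 2 := by
  simp [planeCoord, Complex.equivRealProdCLM_symm_apply]

lemma planeCoord_ne_zero {p : ℝ × ℝ} (hp : p ≠ center) : planeCoord p ≠ 0 := by
  intro h
  have hre : p.1 - 1 / 2 = 0 := by rw [← re_planeCoord, h, Complex.zero_re]
  rw [planeCoord_of_abs_le (by norm_num [hre])] at h
  exact hp (sub_eq_zero.1 ((map_eq_zero_iff _ equivRealProdCLM.symm.injective).1 h))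

/-- The map induced by `fold ∘ planeCoord` on the Möbius band. -/
def foldedCoord : C(M, ℂ) :=
  M.lift (fold.comp planeCoord) fun y ↦ by
    have h0 : clamp (2 - 4 * |0 - 1 / 2|) = 0 := clamp_of_nonpos (by norm_num [abs_of_neg])
    have h1 : clamp (2 - 4 * |1 - 1 / 2|) = 0 := clamp_of_nonpos (by norm_num)
    simp only [ContinuousMap.comp_apply, planeCoord, ContinuousMap.coe_mk, h0, h1, Icc.coe_zero,
      mul_zero, fold_apply]
    norm_num [Complex.equivRealProdCLM_symm_apply]

lemma foldedCoord_chart {p : ℝ × ℝ} (hp : p ∈ Sq) : foldedCoord (chart p) = fold (planeCoord p) :=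
  M.lift_chart _ _ hp

lemma ne_center_of_chart_mem_Xset {p : ℝ × ℝ} (hp : chart p ∈ Xset) : p ≠ center := by
  rintro rfl
  rw [mem_Xset, radius_chart center_mem_Sq, dist_self] at hp
  norm_num at hp

lemma foldedCoord_ne_zero (x : X) : foldedCoord x ≠ 0 := by
  obtain ⟨p, hp, hpx⟩ := exists_chart_eq x.1
  rw [← hpx, foldedCoord_chart hp]
  exact fold_ne_zero (planeCoord_ne_zero (ne_center_of_chart_mem_Xset (hpx ▸ x.2)))

/-- An extension to `X` of a degree-one map from `C2` to the unit circle. -/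
def angle : C(X, Circle) := ⟨fun x ↦ direction ⟨foldedCoord x, foldedCoord_ne_zero x⟩, by fun_prop⟩

/-- The arc along which `angle` takes the value `1`, from `C2` to `C1`. -/
def slit : C(I, X) :=
  ⟨fun t ↦ ⟨chart (1 / 2, 1 / 4 + 3 / 4 * t), by
    have h0 := t.2.1
    have h1 := t.2.2
    rw [mem_Xset, radius_chart (mem_Sq.2 ⟨by norm_num, abs_le.2 ⟨by linarith, by linarith⟩⟩),
      dist_center]
    exact le_max_of_le_right (le_abs.2 (.inl (by linarith)))⟩, by fun_prop⟩

lemma slit_zero_mem_C2 : slit 0 ∈ C2 := by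
  have h : dist ((1 / 2, 1 / 4) : ℝ × ℝ) center = 1 / 4 := by norm_num [dist_center]
  rw [mem_C2, ← h, ← radius_chart (mem_Sq_of_dist_le (by linarith))]
  simp [slit]

lemma slit_of_angle_eq_one {x : X} (hx : angle x = 1) :
    slit (clamp ((4 * height x - 1) / 3)) = x := by
  obtain ⟨⟨a, y⟩, hp, hpx⟩ := exists_chart_eq x.1
  have hne := ne_center_of_chart_mem_Xset (hpx ▸ x.2)
  have hfold : direction ⟨fold (planeCoord (a, y)), fold_ne_zero (planeCoord_ne_zero hne)⟩ = 1 := by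
    simp only [← foldedCoord_chart hp, hpx]
    exact hx
  obtain ⟨hre, him⟩ := re_eq_zero_and_im_pos_of_direction_fold_eq_one
    (planeCoord_ne_zero hne) hfold
  rw [re_planeCoord] at hre
  rw [planeCoord_of_abs_le (by norm_num [hre])] at him
  have hy : 0 < y := by simpa [center, Complex.equivRealProdCLM_symm_apply] using him
  have hr : 1 / 4 ≤ y := by
    have := mem_Xset.1 (hpx ▸ x.2)
    rw [radius_chart hp, dist_center, hre, abs_of_pos hy] at this
    simpa [hy.le] using this
  have hy1 : y ≤ 1 := (abs_le.1 (mem_Sq.1 hp).2).2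
  refine Subtype.ext ?_
  rw [← hpx, height_chart hp, abs_of_pos hy]
  simp only [slit, ContinuousMap.coe_mk]
  rw [coe_clamp_of_mem (by linarith) (by linarith)]
  congr 2 <;> linarith

/-- The Euclidean unit circle, projected radially to the sup-norm sphere bounding the hole. -/
def squarePoint : C(Circle, Metric.sphere (0 : ℝ × ℝ) (1 / 4)) :=
  have hne (z : Circle) : ‖equivRealProdCLM (z : ℂ)‖ ≠ 0 :=
    norm_ne_zero_iff.2 ((map_ne_zero_iff _ equivRealProdCLM.injective).2 z.coe_ne_zero)
  ⟨fun z ↦ ⟨(1 / 4 / ‖equivRealProdCLM (z : ℂ)‖) • equivRealProdCLM (z : ℂ), by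
    rw [mem_sphere_zero_iff_norm, norm_smul, norm_div, norm_norm, div_mul_cancel₀ _ (hne z)]
    norm_num⟩, .subtype_mk (.smul (.div continuous_const (by fun_prop) hne) (by fun_prop)) _⟩

lemma squarePoint_direction {z : {z : ℂ // z ≠ 0}} (hz : ‖equivRealProdCLM (z : ℂ)‖ = 1 / 4) :
    (squarePoint (direction z) : ℝ × ℝ) = equivRealProdCLM z := by
  have hpos : 0 < ‖(z : ℂ)‖ := norm_pos_iff.2 z.2
  have hdir : (direction z : ℂ) = (‖(z : ℂ)‖⁻¹ : ℝ) • (z : ℂ) := by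
    rw [coe_direction, div_eq_inv_mul, Complex.real_smul, Complex.ofReal_inv]
  simp only [squarePoint, ContinuousMap.coe_mk, hdir, map_smul, norm_smul, hz, norm_inv, norm_norm,
    smul_smul]
  rw [show 1 / 4 / (‖(z : ℂ)‖⁻¹ * (1 / 4)) * ‖(z : ℂ)‖⁻¹ = 1 by field_simp, one_smul]

lemma angle_of_mem_C2 {x : X} (hx : x ∈ C2) (hz : equivRealProdCLM.symm (holeCoord x) ≠ 0) :
    angle x = direction ⟨fold (equivRealProdCLM.symm (holeCoord x)), fold_ne_zero hz⟩ := by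
  obtain ⟨p, hp, hpx⟩ := exists_chart_eq x.1
  rw [mem_C2, ← hpx, radius_chart hp] at hx
  have ha : |p.1 - 1 / 2| ≤ 1 / 4 := (le_max_left _ _).trans (dist_center p ▸ hx.le)
  refine congrArg direction (Subtype.ext ?_)
  simp only [← hpx, foldedCoord_chart hp, holeCoord_chart hx.le, planeCoord_of_abs_le ha]

lemma nullhomotopic_of_angle_eq_exp {A : Type*} [TopologicalSpace A] (φ : C(A, C2)) (t : C(A, ℝ))
    (ht : ∀ a, Circle.exp (t a) = angle (φ a)) : φ.Nullhomotopic := by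
  have hnorm (a : A) : ‖holeCoord (φ a)‖ = 1 / 4 :=
    mem_sphere_zero_iff_norm.1 (holeCoord_mem_sphere (mem_C2.1 (φ a).2))
  let z : C(A, ℂ) := ⟨fun a ↦ equivRealProdCLM.symm (holeCoord (φ a)), by fun_prop⟩
  have hz (a : A) : z a ≠ 0 := fun h ↦ by
    have h0 : holeCoord (φ a) = 0 := by simpa [z] using h
    have := hnorm a
    rw [h0, norm_zero] at this
    norm_num at this
  let θ : C(A, ℝ) := ⟨fun a ↦ t a - Real.pi - Real.arccos (z a / ‖z a‖).re, by
    refine .sub (by fun_prop) (Real.continuous_arccos.comp (Complex.continuous_re.comp ?_))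
    exact .div (by fun_prop) (by fun_prop) fun a ↦ by simpa using hz a⟩
  have hθ (a : A) : Circle.exp (θ a) = direction ⟨z a, hz a⟩ := by
    have hangle := (ht a).trans ((angle_of_mem_C2 (φ a).2 (hz a)).trans (direction_fold (hz a)))
    simp only [θ, ContinuousMap.coe_mk, Circle.exp_sub]
    rw [hangle, div_div, div_eq_iff_eq_mul]
    exact (mul_assoc _ _ _).trans (mul_left_comm _ _ _)
  have hφ : ((holePoint.comp squarePoint).comp Circle.exp).comp θ = φ := by
    ext1 a
    rw [← holePoint_holeCoord (φ a)]
    refine congrArg holePoint (Subtype.ext ?_)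
    simp only [hθ]
    rw [squarePoint_direction] <;> simp [z, hnorm]
  rw [← hφ]
  exact ((id_nullhomotopic ℝ).comp_left θ).comp_right _

lemma chart_fract_eq {p : ℝ × ℝ} {n : ℤ} (hp : p.1 ∈ Icc (n : ℝ) (n + 1)) :
    chart (Int.fract p.1, (-1) ^ ⌊p.1⌋ * p.2) = chart (p.1 - n, (-1) ^ n * p.2) := by
  rcases hp.2.eq_or_lt with h | h
  · have hfloor : ⌊p.1⌋ = n + 1 := by rw [h]; exact_mod_cast Int.floor_intCast (n + 1)
    rw [Int.fract, hfloor, Int.cast_add, Int.cast_one, h, sub_self, add_sub_cancel_left,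
      chart_zero_eq_chart_one, zpow_add_one₀ (by norm_num)]
    congr 2
    ring
  · have hfloor : ⌊p.1⌋ = n := Int.floor_eq_iff.2 ⟨hp.1, h⟩
    rw [Int.fract, hfloor]

/-- The plane winding around the Möbius band: on the strip `0 ≤ x ≤ 1` it is `chart`, and
`(x + 1, -y)` goes to the same point as `(x, y)`. -/
def develop : C(ℝ × ℝ, M) where
  toFun p := chart (Int.fract p.1, (-1) ^ ⌊p.1⌋ * p.2)
  continuous_toFun := by
    have hfin : LocallyFinite fun n : ℤ ↦ Prod.fst (β := ℝ) ⁻¹' Icc (n : ℝ) (n + 1) :=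
      (locallyFinite_Icc_of_tendsto tendsto_intCast_atTop_atTop
        (Filter.tendsto_atBot_add_const_right _ _
          (tendsto_intCast_atBot_iff.2 Filter.tendsto_id))).preimage_continuous continuous_fst
    refine hfin.continuous ?_ (fun n ↦ isClosed_Icc.preimage continuous_fst) fun n ↦
      (Continuous.continuousOn (by fun_prop)).congr fun p hp ↦ chart_fract_eq hp
    rw [← preimage_iUnion, iUnion_Icc_intCast, preimage_univ]

lemma develop_of_mem_Icc {p : ℝ × ℝ} (hp : p.1 ∈ Icc (0 : ℝ) 1) : develop p = chart p := by
  refine (chart_fract_eq (n := 0) (by simpa using hp)).trans ?_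
  simp

lemma develop_add_one_neg (x y : ℝ) : develop (x + 1, -y) = develop (x, y) := by
  simp only [develop, ContinuousMap.coe_mk, Int.fract_add_one, Int.floor_add_one,
    zpow_add_one₀ (by norm_num : (-1 : ℝ) ≠ 0)]
  ring_nf

lemma height_develop {p : ℝ × ℝ} (hp : |p.2| ≤ 1) : height (develop p) = |p.2| := by
  have habs : |(-1 : ℝ) ^ ⌊p.1⌋ * p.2| = |p.2| := by simp [abs_mul]
  refine (height_chart (mem_Sq.2 ⟨abs_le.2 ⟨?_, ?_⟩, habs.trans_le hp⟩)).trans habs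
  · linarith [Int.fract_nonneg p.1]
  · linarith [Int.fract_lt_one p.1]

/-- The projection of the plane to the strip `|y| ≤ 1`. -/
def strip : C(ℝ × ℝ, ℝ × ℝ) := ⟨fun p ↦ (p.1, max (-1) (min 1 p.2)), by fun_prop⟩

lemma strip_snd_mem (p : ℝ × ℝ) : (strip p).2 ∈ Icc (-1 : ℝ) 1 :=
  ⟨le_max_left _ _, max_le (by norm_num) (min_le_left _ _)⟩

lemma strip_of_abs_le {p : ℝ × ℝ} (hp : |p.2| ≤ 1) : strip p = p := by
  rw [abs_le] at hp
  exact Prod.ext rfl (by simp [strip, hp])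

lemma strip_add_neg (p : ℝ × ℝ) (a : ℝ) : strip (p.1 + a, -p.2) = ((strip p).1 + a, -(strip p).2) :=
  Prod.ext rfl (by simp only [strip, ContinuousMap.coe_mk]; grind)

/-- The strip is compact modulo `(x, y) ↦ (x + 1, -y)`, so a function that increases by `d > 0`
under this map tends to infinity uniformly. -/
lemma exists_forall_lt_of_strip {T : C(ℝ × ℝ, ℝ)} {d : ℝ} (hd : 0 < d)
    (hT : ∀ x y, T (x + 1, -y) = T (x, y) + d) (hstrip : ∀ p, T (strip p) = T p) (c : ℝ) :
    ∃ n : ℕ, ∀ x y : ℝ, n ≤ x → c < T (x, y) := by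
  have hcompact : IsCompact (Icc (0 : ℝ) 1 ×ˢ Icc (-1 : ℝ) 1) := isCompact_Icc.prod isCompact_Icc
  obtain ⟨b, hb⟩ := hcompact.bddBelow_image T.continuous.continuousOn
  have hgrow (k : ℕ) : ∀ x ∈ Icc (k : ℝ) (k + 1), ∀ y, b + k * d ≤ T (x, y) := by
    induction k with
    | zero =>
      intro x hx y
      rw [← hstrip, Nat.cast_zero, zero_mul, add_zero]
      exact hb ⟨_, ⟨by simpa [strip] using hx, strip_snd_mem _⟩, rfl⟩
    | succ k ih =>
      intro x hx y
      have h := hT (x - 1) (-y)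
      rw [sub_add_cancel, neg_neg] at h
      have := ih (x - 1) (by push_cast at hx; constructor <;> linarith [hx.1, hx.2]) (-y)
      push_cast
      linarith
  obtain ⟨n, hn⟩ := exists_nat_gt ((c - b) / d)
  refine ⟨n, fun x y hx ↦ ?_⟩
  have hx0 : 0 ≤ x := n.cast_nonneg.trans hx
  have hfloor : (n : ℝ) ≤ ⌊x⌋₊ := by exact_mod_cast Nat.le_floor hx
  rw [div_lt_iff₀ hd] at hn
  nlinarith [hgrow _ x ⟨Nat.floor_le hx0, (Nat.lt_floor_add_one x).le⟩ y]

lemma mem_C2_of_height_eq_one {F : C(M, X)} {φ : C(C1, C2)} (hφ : ∀ x, (φ x : X) = F x) {m : M}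
    (hm : height m = 1) : F m ∈ C2 := by
  have hmX : m ∈ Xset := mem_Xset.2 (by linarith [height_le_radius m])
  exact hφ ⟨⟨m, hmX⟩, mem_C1.2 hm⟩ ▸ (φ _).2

lemma exists_lift_angle_of_essential {F : C(M, X)} {φ : C(C1, C2)} (hφ : ∀ x, (φ x : X) = F x)
    (hess : ¬ φ.Nullhomotopic) :
    ∃ (T : C(ℝ × ℝ, ℝ)) (d : ℝ), 0 < d ∧ (∀ x y, T (x + 1, -y) = T (x, y) + d) ∧
      (∀ p, T (strip p) = T p) ∧ ∀ p, Circle.exp (T p) = 1 → angle (F (develop (strip p))) = 1 := by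
  obtain ⟨t, m, ht, hm⟩ := exists_equivariant_lift_circle (angle.comp (F.comp develop))
    ⟨fun p : ℝ × ℝ ↦ (p.1 + 1, -p.2), by fun_prop⟩
    (ContinuousMap.ext fun p ↦ congrArg (fun m ↦ angle (F m)) (develop_add_one_neg p.1 p.2))
  have hm0 : m ≠ 0 := by
    rintro rfl
    let u : C(M, ℝ) := M.lift t fun y ↦ by simpa using (hm (0, y)).symm
    refine hess (nullhomotopic_of_angle_eq_exp φ ⟨fun x ↦ u x, by fun_prop⟩ fun x ↦ ?_)
    obtain ⟨p, hp, hpx⟩ := exists_chart_eq x.1.1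
    have hu : u x = t p := by rw [← hpx]; exact M.lift_chart _ _ hp
    have ht' : Circle.exp (u x) = angle (F (develop p)) := by rw [hu]; exact ht p
    rwa [develop_of_mem_Icc hp.1, hpx, ← hφ] at ht'
  have hstrip (p : ℝ × ℝ) : strip (strip p) = strip p :=
    strip_of_abs_le (abs_le.2 (strip_snd_mem p))
  have hstep (x y : ℝ) : t (strip (x + 1, -y)) = t (strip (x, y)) + m * (2 * Real.pi) :=
    (congrArg t (strip_add_neg (x, y) 1)).trans (hm _)
  have hexp (p : ℝ × ℝ) (h : Circle.exp (t (strip p)) = 1) : angle (F (develop (strip p))) = 1 :=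
    (ht _).symm.trans h
  rcases lt_or_gt_of_ne hm0 with h | h
  · refine ⟨-t.comp strip, -(m * (2 * Real.pi)), ?_, fun x y ↦ ?_, fun p ↦ ?_, fun p hp ↦ ?_⟩
    · have : (m : ℝ) < 0 := by exact_mod_cast h
      nlinarith [Real.pi_pos]
    · simp only [ContinuousMap.neg_apply, ContinuousMap.comp_apply, hstep]
      ring
    · simp [hstrip]
    · exact hexp p (inv_eq_one.1 ((Circle.exp_neg _).symm.trans hp))
  · refine ⟨t.comp strip, m * (2 * Real.pi), ?_, hstep, fun p ↦ congrArg t (hstrip p), hexp⟩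
    have : (0 : ℝ) < m := by exact_mod_cast h
    positivity

/-- Once the angle along `P (·, y)` has reached the level `l`, one can leave `P` and slide along the
slit into `C2`. -/
lemma exists_slide_into_C2 {P : C(ℝ × ℝ, X)} {T : C(ℝ × ℝ, ℝ)} {l : ℝ}
    (hslit : ∀ p, T p = l → angle (P p) = 1) (h0 : ∀ y, T (0, y) ≤ l) {n : ℕ}
    (hn : ∀ x y : ℝ, n ≤ x → l < T (x, y)) :
    ∃ K : C(ℝ × ℝ, X), (∀ y, K (0, y) = P (0, y)) ∧ (∀ y, K (1, y) ∈ C2) ∧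
      ∀ y, (∀ x, P (x, y) ∈ C2) → ∀ x, K (x, y) ∈ C2 := by
  let scaled (p : ℝ × ℝ) : ℝ × ℝ := ((n + 1) * p.1, p.2)
  have hcont : Continuous scaled := by fun_prop
  let slide (p : ℝ × ℝ) : X :=
    slit (clamp ((4 * height (P (scaled p)) - 1) / 3) * clamp ((n + 1) * (1 - p.1)))
  let K : C(ℝ × ℝ, X) := ⟨fun p ↦ if T (scaled p) ≤ l then P (scaled p) else slide p, by
    refine .if_le (by fun_prop) (by fun_prop) (by fun_prop) continuous_const fun p hp ↦ ?_
    have hlt : (n + 1) * p.1 < n := not_le.1 fun h ↦ (hn _ _ h).ne' hp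
    have hone : clamp ((n + 1) * (1 - p.1)) = 1 := clamp_of_one_le (by linarith)
    simp only [slide, hone, mul_one]
    exact (slit_of_angle_eq_one (hslit _ hp)).symm⟩
  refine ⟨K, fun y ↦ ?_, fun y ↦ ?_, fun y hy x ↦ ?_⟩
  · have hscaled : scaled (0, y) = (0, y) := by simp [scaled]
    simp [K, hscaled, h0]
  · have hlt : ¬ T (scaled (1, y)) ≤ l := (hn _ _ (by simp)).not_ge
    simpa [K, hlt, slide, clamp_of_nonpos le_rfl] using slit_zero_mem_C2
  · have hP : P (scaled (x, y)) ∈ C2 := hy _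
    have hzero : clamp ((4 * height (P (scaled (x, y))) - 1) / 3) = 0 :=
      clamp_of_nonpos (by linarith [height_le_radius (P (scaled (x, y))), mem_C2.1 hP])
    by_cases h : T (scaled (x, y)) ≤ l
    · simpa [K, h] using hP
    · simpa [K, h, slide, hzero] using slit_zero_mem_C2

lemma exists_extension_of_slide {P K : C(ℝ × ℝ, X)} (hP : ∀ x y, P (x + 1, -y) = P (x, y))
    (hK0 : ∀ y, K (0, y) = P (0, y)) :
    ∃ E : C(ℝ × ℝ, X), (∀ x ∈ Icc (0 : ℝ) 1, ∀ y, E (x, y) = P (x, y)) ∧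
      (∀ x ≤ 0, ∀ y, E (x, y) = K (-x, y)) ∧ ∀ x, 1 ≤ x → ∀ y, E (x, y) = K (x - 1, -y) := by
  have hP1 (y : ℝ) : P (1, y) = P (0, -y) := by simpa using hP 0 (-y)
  let E : C(ℝ × ℝ, X) := ⟨fun p ↦ if p.1 ≤ 0 then K (-p.1, p.2) else
      if p.1 ≤ 1 then P p else K (p.1 - 1, -p.2), by
    refine .if_le (by fun_prop) (.if_le (by fun_prop) (by fun_prop) (by fun_prop) (by fun_prop) ?_)
      (by fun_prop) (by fun_prop) ?_
    · rintro ⟨x, y⟩ rfl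
      simp [hK0, hP1]
    · rintro ⟨x, y⟩ rfl
      simp [hK0]⟩
  refine ⟨E, fun x hx y ↦ ?_, fun x hx y ↦ if_pos hx, fun x hx y ↦ ?_⟩
  · rcases hx.1.eq_or_lt with rfl | h
    · simp [E, hK0]
    · simp [E, h.not_ge, hx.2]
  · rcases hx.eq_or_lt with rfl | h
    · simp [E, hK0, hP1]
    · simp [E, h.not_ge, (zero_lt_one.trans h).not_ge]

lemma exists_developed_extension {F : C(M, X)} {φ : C(C1, C2)} (hφ : ∀ x, (φ x : X) = F x)
    (hess : ¬ φ.Nullhomotopic) :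
    ∃ E : C(ℝ × ℝ, X), (∀ p ∈ Sq, E p = F (chart p)) ∧
      (∀ s, 0 ≤ s → ∀ y, E (-s, y) = E (1 + s, -y)) ∧ (∀ y, E (-1, y) ∈ C2) ∧
      ∀ x y, |y| = 1 → E (x, y) ∈ C2 := by
  obtain ⟨T, d, hd, hT, hTstrip, hTF⟩ := exists_lift_angle_of_essential hφ hess
  let P : C(ℝ × ℝ, X) := F.comp (develop.comp strip)
  have hP (x y : ℝ) : P (x + 1, -y) = P (x, y) := by
    refine congrArg F ((congrArg develop (strip_add_neg (x, y) 1)).trans ?_)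
    exact develop_add_one_neg _ _
  have hPC2 (x y : ℝ) (hy : |y| = 1) : P (x, y) ∈ C2 := by
    have hs : P (x, y) = F (develop (x, y)) := congrArg (F ∘ develop) (strip_of_abs_le hy.le)
    exact hs ▸ mem_C2_of_height_eq_one hφ ((height_develop hy.le).trans hy)
  obtain ⟨b, hb⟩ := ((isCompact_singleton (x := (0 : ℝ))).prod
    (isCompact_Icc (a := (-1 : ℝ)) (b := 1))).bddAbove_image T.continuous.continuousOn
  have hT0 (y : ℝ) : T (0, y) ≤ ⌈b / (2 * Real.pi)⌉ * (2 * Real.pi) := by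
    rw [← div_le_iff₀ Real.two_pi_pos]
    refine le_trans ?_ (Int.le_ceil _)
    gcongr
    exact hTstrip (0, y) ▸ hb ⟨strip (0, y), ⟨rfl, strip_snd_mem _⟩, rfl⟩
  obtain ⟨n, hn⟩ := exists_forall_lt_of_strip hd hT hTstrip (⌈b / (2 * Real.pi)⌉ * (2 * Real.pi))
  obtain ⟨K, hK0, hK1, hK⟩ := exists_slide_into_C2 (P := P)
    (fun p hp ↦ hTF p (by rw [hp, Circle.exp_int_mul_two_pi])) hT0 hn
  obtain ⟨E, hEP, hEleft, hEright⟩ := exists_extension_of_slide hP hK0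
  have hE1 (y : ℝ) : E (-1, y) ∈ C2 := by
    rw [hEleft _ (by norm_num), neg_neg]
    exact hK1 y
  refine ⟨E, fun p hp ↦ ?_, fun s hs y ↦ ?_, hE1, fun x y hy ↦ ?_⟩
  · refine (hEP p.1 hp.1 p.2).trans (congrArg F ?_)
    exact (congrArg develop (strip_of_abs_le (mem_Sq.1 hp).2)).trans (develop_of_mem_Icc hp.1)
  · rw [hEleft _ (by linarith), hEright _ (by linarith), neg_neg, neg_neg, add_sub_cancel_left]
  · rcases le_total x 0 with h | h
    · exact hEleft x h y ▸ hK y (hPC2 · y hy) _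
    rcases le_total x 1 with h' | h'
    · exact hEP x ⟨h, h'⟩ y ▸ hPC2 x y hy
    · exact hEright x h' y ▸ hK (-y) (hPC2 · (-y) (by rwa [abs_neg])) _

section Stretch

/-- Vanishes for `|y| ≤ 1 / 2` and fixes `1` and `-1`. -/
def stretchHeight : C(ℝ, ℝ) := ⟨fun y ↦ max 0 (2 * y - 1) + min 0 (2 * y + 1), by fun_prop⟩

lemma stretchHeight_neg (y : ℝ) : stretchHeight (-y) = -stretchHeight y := by
  simp only [stretchHeight, ContinuousMap.coe_mk]
  grind

lemma stretchHeight_of_abs_le {y : ℝ} (hy : |y| ≤ 1 / 2) : stretchHeight y = 0 := by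
  rw [abs_le] at hy
  simp only [stretchHeight, ContinuousMap.coe_mk]
  grind

lemma stretchHeight_of_abs_eq {y : ℝ} (hy : |y| = 1) : stretchHeight y = y := by
  rcases (abs_eq zero_le_one).1 hy with rfl | rfl <;> norm_num [stretchHeight]

/-- A map that sends the band `|y| ≤ 1 / 2` of the square to the left, upper and right edge of
`[-1, 2] × [-1, 1]`, and extends to the square respecting its upper and lower edge. -/
def stretch : C(ℝ × ℝ, ℝ × ℝ) :=
  ⟨fun p ↦ (3 * clamp (3 * p.1 - 1) - 1,
    clamp (3 * min p.1 (1 - p.1)) * (1 - |stretchHeight p.2|) + stretchHeight p.2), by fun_prop⟩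

lemma stretch_zero (y : ℝ) : stretch (0, y) = (-1, stretchHeight y) := by
  simp [stretch, clamp_of_nonpos (x := -1) (by norm_num), clamp_of_nonpos (x := 0) le_rfl]

lemma stretch_one (y : ℝ) : stretch (1, y) = (2, stretchHeight y) := by
  have h : clamp (3 * 1 - 1) = 1 := clamp_of_one_le (by norm_num)
  simp only [stretch, ContinuousMap.coe_mk, h]
  norm_num [clamp_of_nonpos (x := 0) le_rfl]

lemma stretch_snd_of_abs_eq {p : ℝ × ℝ} (hp : |p.2| = 1) : (stretch p).2 = p.2 := by
  simp [stretch, stretchHeight_of_abs_eq hp, hp]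

lemma stretch_of_abs_le {p : ℝ × ℝ} (hp : |p.2| ≤ 1 / 2) :
    (stretch p).1 = -1 ∨ (stretch p).1 = 2 ∨ (stretch p).2 = 1 := by
  simp only [stretch, ContinuousMap.coe_mk, stretchHeight_of_abs_le hp]
  rcases le_total p.1 (1 / 3) with h | h
  · simp [clamp_of_nonpos (x := 3 * p.1 - 1) (by linarith)]
  rcases le_total p.1 (2 / 3) with h' | h'
  · have hmin : 1 ≤ 3 * min p.1 (1 - p.1) := by
      linarith [le_min h (by linarith : (1 : ℝ) / 3 ≤ 1 - p.1)]
    simp [clamp_of_one_le hmin]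
  · norm_num [clamp_of_one_le (x := 3 * p.1 - 1) (by linarith)]

end Stretch

/-- The core circle of the band is pulled around the boundary of `[-1, 2] × [-1, 1]`, which the
developed extension of `F` sends into `C2`. -/
lemma exists_deformation_core_into_C2 {F : C(M, X)} {φ : C(C1, C2)}
    (hφ : ∀ x, (φ x : X) = F x) (hess : ¬ φ.Nullhomotopic) :
    ∃ G : C(I × M, X), (∀ m, G (0, m) = F m) ∧ (∀ s m, height m = 1 → G (s, m) ∈ C2) ∧
      ∀ m, height m ≤ 1 / 2 → G (1, m) ∈ C2 := by
  obtain ⟨E, hEF, hEsymm, hEleft, hEedge⟩ := exists_developed_extension hφ hess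
  have hEright (y : ℝ) : E (2, y) ∈ C2 := by
    have h := hEsymm 1 zero_le_one (-y)
    rw [neg_neg] at h
    norm_num at h
    exact h ▸ hEleft (-y)
  let h : C(I × (ℝ × ℝ), X) := ⟨fun q ↦ E (lineMap q.2 (stretch q.2) (q.1 : ℝ)), by
    simp only [lineMap_apply]; fun_prop⟩
  have hh (s : I) (y : ℝ) : h (s, 0, y) = h (s, 1, -y) := by
    have hleft : lineMap (0, y) (stretch (0, y)) (s : ℝ) =
        (-(s : ℝ), lineMap y (stretchHeight y) (s : ℝ)) := by
      simp [lineMap_apply, stretch_zero]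
    have hright : lineMap (1, -y) (stretch (1, -y)) (s : ℝ) =
        (1 + (s : ℝ), -lineMap y (stretchHeight y) (s : ℝ)) := by
      simp only [lineMap_apply_module, stretch_one, stretchHeight_neg, Prod.smul_mk, smul_eq_mul,
        Prod.mk_add_mk]
      ring_nf
    simp only [h, ContinuousMap.coe_mk, hleft, hright]
    exact hEsymm s s.2.1 _
  refine ⟨M.liftFamily h hh, fun m ↦ ?_, fun s m hm ↦ ?_, fun m hm ↦ ?_⟩
  all_goals obtain ⟨p, hp, rfl⟩ := exists_chart_eq m
  all_goals rw [M.liftFamily_chart _ _ _ hp]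
  · simpa [h] using hEF p hp
  · rw [height_chart hp] at hm
    have hsnd : (lineMap p (stretch p) (s : ℝ) : ℝ × ℝ).2 = p.2 := by
      simp [lineMap_apply, stretch_snd_of_abs_eq hm]
    exact hEedge _ _ ((congrArg abs hsnd).trans hm)
  · rw [height_chart hp] at hm
    simp only [h, ContinuousMap.coe_mk, Icc.coe_one, lineMap_apply_one]
    rw [← Prod.mk.eta (p := stretch p)]
    rcases stretch_of_abs_le hm with h | h | h <;> rw [h]
    exacts [hEleft _, hEright _, hEedge _ _ abs_one]

section Contract

/-- Vanishes at radius `1 / 4` and is `1` from radius `5 / 16` on. -/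
def innerCutoff : C(M, I) := ⟨fun m ↦ clamp (16 * (radius m - 1 / 4)), by fun_prop⟩

/-- Is `1` up to radius `5 / 16` and vanishes from radius `3 / 8` on. -/
def outerCutoff : C(M, I) := ⟨fun m ↦ clamp (16 * (3 / 8 - radius m)), by fun_prop⟩

lemma innerCutoff_of_radius_eq {m : M} (hm : radius m = 1 / 4) : innerCutoff m = 0 :=
  clamp_of_nonpos (by rw [hm]; norm_num)

lemma innerCutoff_of_le {m : M} (hm : 5 / 16 ≤ radius m) : innerCutoff m = 1 :=
  clamp_of_one_le (by linarith)

lemma outerCutoff_of_le {m : M} (hm : radius m ≤ 5 / 16) : outerCutoff m = 1 :=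
  clamp_of_one_le (by linarith)

lemma outerCutoff_of_ge {m : M} (hm : 3 / 8 ≤ radius m) : outerCutoff m = 0 :=
  clamp_of_nonpos (by linarith)

lemma coe_outerCutoff_of_mem {m : M} (hm : radius m ∈ Icc (5 / 16 : ℝ) (3 / 8)) :
    (outerCutoff m : ℝ) = 16 * (3 / 8 - radius m) :=
  coe_clamp_of_mem (by linarith [hm.2]) (by linarith [hm.1])

/-- The deformation `G`, run only away from the hole, combined with the collapse of a disc around
the hole, a vertical compression of the image and an enlargement of the hole in the image. At time
`1` the only fixed point is at distance `1 / 3` from the centre of the hole. -/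
def contract (G : C(I × M, X)) : C(I × M, X) :=
  ⟨fun q ↦ pushOut (q.1 * outerCutoff q.2,
    squeeze (q.1 * innerCutoff q.2, G (q.1 * innerCutoff q.2, shrink q))), by fun_prop⟩

variable {G : C(I × M, X)}

lemma contract_zero (m : M) : contract G (0, m) = G (0, m) := by
  simp [contract, pushOut_zero, squeeze_zero, shrink_zero]

lemma contract_mem_C1 (hG : ∀ m, radius m ≤ 1 / 4 → G (0, m) ∈ C1) (s : I) {m : M}
    (hm : radius m = 1 / 4) : contract G (s, m) ∈ C1 := by
  have h := hG (shrink (s, m)) ((radius_shrink_le s m).trans hm.le)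
  have hr := (mem_C1.1 h).ge.trans (height_le_radius _)
  simp only [contract, ContinuousMap.coe_mk, innerCutoff_of_radius_eq hm, mul_zero, squeeze_zero]
  rwa [pushOut_of_half_le _ (by linarith)]

lemma contract_mem_C2 (hG : ∀ s m, height m = 1 → G (s, m) ∈ C2) (s : I) {m : M}
    (hm : height m = 1) : contract G (s, m) ∈ C2 := by
  have hr : 1 ≤ radius m := hm ▸ height_le_radius m
  simp only [contract, ContinuousMap.coe_mk, innerCutoff_of_le (by linarith : 5 / 16 ≤ radius m),
    outerCutoff_of_ge (by linarith : 3 / 8 ≤ radius m),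
    shrink_of_half_le s (by linarith : 1 / 2 ≤ radius m), mul_one, mul_zero, pushOut_zero]
  rw [squeeze_of_mem_C2 _ (hG s m hm)]
  exact hG s m hm

lemma contract_one_ne_of_ge (hG : ∀ m, height m ≤ 1 / 2 → G (1, m) ∈ C2) {m : M}
    (hm : 3 / 8 ≤ radius m) : (contract G (1, m) : M) ≠ m := by
  intro hfix
  have hval : contract G (1, m) = squeeze (1, G (1, shrink (1, m))) := by
    simp [contract, innerCutoff_of_le (by linarith : 5 / 16 ≤ radius m), outerCutoff_of_ge hm,
      pushOut_zero]
  have hheight : height m ≤ 2 / 5 := by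
    rw [← hfix, hval]
    exact height_squeeze_one_le _
  have hC2 := hG (shrink (1, m)) ((height_shrink_le 1 m).trans (by linarith))
  rw [hval, squeeze_of_mem_C2 1 hC2] at hfix
  linarith [hfix ▸ mem_C2.1 hC2]

lemma contract_one_ne_of_le {m : M} (hm : radius m ≤ 5 / 16) : (contract G (1, m) : M) ≠ m := by
  intro hfix
  have hval : contract G (1, m) =
      pushOut (1, squeeze (innerCutoff m, G (innerCutoff m, shrink (1, m)))) := by
    simp [contract, outerCutoff_of_le hm]
  have hr : 3 / 8 ≤ radius m := by
    rw [← hfix, hval]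
    exact le_radius_pushOut_one _
  linarith

lemma contract_one_of_mem (hG : G (1, chart center) ∈ C2) {m : M}
    (hm : radius m ∈ Icc (5 / 16 : ℝ) (3 / 8)) :
    contract G (1, m) = pushOut (outerCutoff m, G (1, chart center)) := by
  simp [contract, innerCutoff_of_le hm.1, shrink_one_of_le hm.2, squeeze_of_mem_C2 1 hG]

lemma existsUnique_contract_one_eq (hG : ∀ m, height m ≤ 1 / 2 → G (1, m) ∈ C2) :
    ∃! x : X, contract G (1, x) = x := by
  have hcenter : G (1, chart center) ∈ C2 :=
    hG _ (by rw [height_chart center_mem_Sq]; norm_num [center])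
  let t : I := ⟨2 / 3, by norm_num, by norm_num⟩
  have hradius : radius (pushOut (t, G (1, chart center))) = 1 / 3 := by
    rw [radius_pushOut_of_mem_C2 t hcenter]
    norm_num [t]
  have hcutoff {m : M} (hm : radius m = 1 / 3) : outerCutoff m = t :=
    Subtype.ext ((coe_outerCutoff_of_mem (by norm_num [hm])).trans (by norm_num [hm, t]))
  have hval {m : M} (hm : radius m = 1 / 3) :
      contract G (1, m) = pushOut (t, G (1, chart center)) := by
    rw [contract_one_of_mem hcenter (by norm_num [hm]), hcutoff hm]
  refine ⟨_, hval hradius, fun x hx ↦ ?_⟩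
  have hmem : radius x ∈ Icc (5 / 16 : ℝ) (3 / 8) :=
    ⟨le_of_not_ge fun h ↦ contract_one_ne_of_le h (congrArg _ hx),
      le_of_not_ge fun h ↦ contract_one_ne_of_ge hG h (congrArg _ hx)⟩
  have hx3 : radius x = 1 / 3 := by
    have h := radius_pushOut_of_mem_C2 (outerCutoff x) hcenter
    rw [← contract_one_of_mem hcenter hmem, hx, coe_outerCutoff_of_mem hmem] at h
    linarith
  exact hx.symm.trans (hval hx3)

end Contract

end

/-- A boundary semi-essential map of the punctured Möbius band interchanging the
boundary circles, with `f|C₁ : C₁ → C₂` essential and `f|C₂` inessential, is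
boundary-homotopic to a map with exactly one fixed point. -/
theorem stmt_12 (f : C(X, X)) (hf : BoundaryPreserving f)
    (h12 : MapsTo f C1 C2) (h21 : MapsTo f C2 C1)
    (he1 : Essential (restrictMap f h12))
    (h2 : Inessential (restrictMap f (h21.mono_right Set.subset_union_left : MapsTo f C2 Bd))) :
    ∃ g : C(X, X), BoundaryHomotopic f g ∧ ∃ x₀ : X, {x : X | g x = x} = {x₀} := by
  obtain ⟨F, hFf, hFC1⟩ := exists_extension_over_hole f h21
    (nullhomotopic_of_nullhomotopic_union isClosed_C1 isClosed_C2 disjoint_C1_C2 h2)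
  obtain ⟨G, hG0, hGC2, hGcore⟩ := exists_deformation_core_into_C2 (φ := restrictMap f h12)
    (fun x ↦ (hFf x).symm) he1
  let H : C(unitInterval × X, X) :=
    (contract G).comp (.prodMap (.id _) ⟨Subtype.val, continuous_subtype_val⟩)
  have hH0 (x : X) : H (0, x) = f x := (contract_zero _).trans ((hG0 x).trans (hFf x))
  refine ⟨H.curry 1, ⟨⟨H, hH0, fun _ ↦ rfl⟩, ?_⟩,
    singleton_iff_unique_mem.2 (existsUnique_contract_one_eq hGcore)⟩
  rintro x (hx | hx) t
  · exact .inr (contract_mem_C2 hGC2 t (mem_C1.1 hx))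
  · exact .inl (contract_mem_C1 (fun m hm ↦ hG0 m ▸ hFC1 m hm) t (mem_C2.1 hx))

end PMB
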